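/- Let S = {a_1, …, a_p} be integers and define, for θ ∈ ℝ^p, D(θ) = θ_1²(θ_1−1)² + ⋯ + θ_p²(θ_p−1)² + (1 + Σ θ_i a_i)². Then there exists θ ∈ ℝ^p with D(θ) = 0 if and only if there exists a subset S' ⊆ S with Σ_{a_i∈S'} a_i = −1. -/

import Mathlib

section BooleanVectors

variable {ι R : Type*}

theorem sq_mul_sub_one_sq_eq_zero_iff [Ring R] [NoZeroDivisors R] {x : R} :
    x ^ 2 * (x - 1) ^ 2 = 0 ↔ x = 0 ∨ x = 1 := by
  rw [mul_eq_zero, sq_eq_zero_iff, sq_eq_zero_iff, sub_eq_zero]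

theorem forall_eq_zero_or_eq_one_iff_exists_indicator [Finite ι] [Zero R] [One R] {θ : ι → R} :
    (∀ i, θ i = 0 ∨ θ i = 1) ↔ ∃ S : Finset ι, θ = (S : Set ι).indicator 1 := by
  classical
  constructor
  · intro hθ
    refine ⟨(Set.toFinite {i | θ i = 1}).toFinset, funext fun i ↦ ?_⟩
    rw [Set.Finite.coe_toFinset, Set.indicator_apply]
    split_ifs with h_one
    · exact h_one
    · exact (hθ i).resolve_right h_one
  · rintro ⟨S, rfl⟩ i
    exact Set.indicator_eq_zero_or_self _ _ i

theorem sum_indicator_one_mul [Fintype ι] [NonAssocSemiring R] (S : Finset ι) (a : ι → R) :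
    ∑ i, (S : Set ι).indicator 1 i * a i = ∑ i ∈ S, a i := by
  classical
  simp [Set.indicator_apply]

variable [Fintype ι] [Ring R] [LinearOrder R] [IsStrictOrderedRing R]

theorem sum_sq_mul_sub_one_sq_eq_zero_iff {θ : ι → R} :
    ∑ i, θ i ^ 2 * (θ i - 1) ^ 2 = 0 ↔ ∀ i, θ i = 0 ∨ θ i = 1 := by
  rw [Finset.sum_eq_zero_iff_of_nonneg fun i _ ↦ mul_nonneg (sq_nonneg _) (sq_nonneg _)]
  simp only [Finset.mem_univ, true_imp_iff, sq_mul_sub_one_sq_eq_zero_iff]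

theorem sum_sq_mul_sub_one_sq_add_sq_eq_zero_iff {θ : ι → R} {y : R} :
    ∑ i, θ i ^ 2 * (θ i - 1) ^ 2 + y ^ 2 = 0 ↔
      (∃ S : Finset ι, θ = (S : Set ι).indicator 1) ∧ y = 0 := by
  have h_nonneg : 0 ≤ ∑ i, θ i ^ 2 * (θ i - 1) ^ 2 :=
    Finset.sum_nonneg fun i _ ↦ mul_nonneg (sq_nonneg _) (sq_nonneg _)
  rw [add_eq_zero_iff_of_nonneg h_nonneg (sq_nonneg y), sum_sq_mul_sub_one_sq_eq_zero_iff,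
    forall_eq_zero_or_eq_one_iff_exists_indicator, sq_eq_zero_iff]

theorem exists_root_iff_subset_sum_neg_one_general (a : ι → R) (c : R) :
    (∃ θ : ι → R, ∑ i, θ i ^ 2 * (θ i - 1) ^ 2 + (c + ∑ i, θ i * a i) ^ 2 = 0) ↔
      ∃ S : Finset ι, ∑ i ∈ S, a i = -c := by
  simp only [sum_sq_mul_sub_one_sq_add_sq_eq_zero_iff]
  constructor
  · rintro ⟨_, ⟨S, rfl⟩, h_sum⟩
    rw [sum_indicator_one_mul] at h_sum
    exact ⟨S, eq_neg_of_add_eq_zero_right h_sum⟩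
  · rintro ⟨S, h_sum⟩
    refine ⟨_, ⟨S, rfl⟩, ?_⟩
    rw [sum_indicator_one_mul, h_sum, add_neg_cancel]

end BooleanVectors

/-- `D(θ) = Σ θᵢ²(θᵢ-1)² + (1 + Σ θᵢ aᵢ)²` has a real root iff some subset of the
integers `a₁, …, a_p` sums to `-1`. -/
theorem exists_root_iff_subset_sum_neg_one (p : ℕ) (a : Fin p → ℤ) :
    (∃ θ : Fin p → ℝ,
        (∑ i, (θ i) ^ 2 * (θ i - 1) ^ 2) + (1 + ∑ i, θ i * (a i : ℝ)) ^ 2 = 0) ↔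
    (∃ S' : Finset (Fin p), (∑ i ∈ S', a i) = -1) := by
  rw [exists_root_iff_subset_sum_neg_one_general]
  norm_cast
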